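/- Let A₁, B₁, A₂, B₂ be finite types, let J₁, K₁ be positive semidefinite matrices indexed by (A₁×B₁)×(A₁×B₁), let J₂, K₂ be positive semidefinite matrices indexed by (A₂×B₂)×(A₂×B₂), and let α ∈ (1,2]. Let Ĵ (respectively K̂) denote J₁ ⊗ J₂ (respectively K₁ ⊗ K₂) reindexed along the canonical bijection (A₁×B₁)×(A₂×B₂) ≃ (A₁×A₂)×(B₁×B₂). Then λ_max( tr_{B₁×B₂} G_{1−α}(Ĵ, K̂) ) = λ_max( tr_{B₁} G_{1−α}(J₁, K₁) ) · λ_max( tr_{B₂} G_{1−α}(J₂, K₂) ). (This expresses the additivity of the geometric Rényi channel divergence under tensor products of channels, in terms of Choi matrices.) -/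

import Mathlib

open Matrix Kronecker ComplexOrder

/-- The Loewner order: `A ≤ B` iff `B - A` is positive semidefinite. -/
def Loewner {n : Type*} [Fintype n] (A B : Matrix n n ℂ) : Prop := (B - A).PosSemidef

/-- Real matrix power via the spectral decomposition, with the convention `0 ^ β = 0`
(so negative powers are Moore–Penrose pseudo-inverses on the support); defined to be `0`
on non-Hermitian matrices. -/
noncomputable def mpow {n : Type*} [Fintype n] [DecidableEq n] (A : Matrix n n ℂ) (β : ℝ) :
    Matrix n n ℂ :=
  if hA : A.IsHermitian then
    (hA.eigenvectorUnitary : Matrix n n ℂ) *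
      Matrix.diagonal (fun i =>
        (Complex.ofReal (if hA.eigenvalues i = 0 then 0 else (hA.eigenvalues i) ^ β))) *
      (star (hA.eigenvectorUnitary : Matrix n n ℂ))
  else 0

/-- Matrix logarithm via the spectral decomposition (with `Real.log 0 = 0` on the kernel);
defined to be `0` on non-Hermitian matrices. -/
noncomputable def mlog {n : Type*} [Fintype n] [DecidableEq n] (A : Matrix n n ℂ) :
    Matrix n n ℂ :=
  if hA : A.IsHermitian then
    (hA.eigenvectorUnitary : Matrix n n ℂ) *
      Matrix.diagonal (fun i => (Complex.ofReal (Real.log (hA.eigenvalues i)))) *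
      (star (hA.eigenvectorUnitary : Matrix n n ℂ))
  else 0

/-- Weighted matrix geometric mean `G_β(X,Y) = X^{1/2} (X^{-1/2} Y X^{-1/2})^β X^{1/2}`. -/
noncomputable def geomMean {n : Type*} [Fintype n] [DecidableEq n] (β : ℝ)
    (X Y : Matrix n n ℂ) : Matrix n n ℂ :=
  mpow X (1/2) * mpow (mpow X (-(1/2)) * Y * mpow X (-(1/2))) β * mpow X (1/2)

/-- Operator relative entropy `D_op(X,Y) = X^{1/2} log(X^{1/2} Y⁻¹ X^{1/2}) X^{1/2}`. -/
noncomputable def Dop {n : Type*} [Fintype n] [DecidableEq n] (X Y : Matrix n n ℂ) :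
    Matrix n n ℂ :=
  mpow X (1/2) * mlog (mpow X (1/2) * Y⁻¹ * mpow X (1/2)) * mpow X (1/2)

/-- Geometric Rényi divergence `D̂_α(ρ‖σ) = (α-1)⁻¹ log tr G_{1-α}(ρ,σ)`. -/
noncomputable def Dhat {n : Type*} [Fintype n] [DecidableEq n] (α : ℝ)
    (ρ σ : Matrix n n ℂ) : ℝ :=
  (α - 1)⁻¹ * Real.log ((geomMean (1 - α) ρ σ).trace.re)

/-- Max-relative entropy `D_max(ρ‖σ) = log inf {t : ρ ≤ t σ}`. -/
noncomputable def Dmax {n : Type*} [Fintype n] (ρ σ : Matrix n n ℂ) : ℝ :=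
  Real.log (sInf {t : ℝ | Loewner ρ (t • σ)})

/-- Umegaki relative entropy `D(ρ‖σ) = tr[ρ (log ρ - log σ)]`. -/
noncomputable def Dum {n : Type*} [Fintype n] [DecidableEq n] (ρ σ : Matrix n n ℂ) : ℝ :=
  ((ρ * (mlog ρ - mlog σ)).trace).re

/-- Sandwiched Rényi divergence. -/
noncomputable def Dsand {n : Type*} [Fintype n] [DecidableEq n] (α : ℝ)
    (ρ σ : Matrix n n ℂ) : ℝ :=
  (α - 1)⁻¹ *
    Real.log ((mpow (mpow σ ((1 - α)/(2*α)) * ρ * mpow σ ((1 - α)/(2*α))) α).trace.re)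

/-- Petz Rényi divergence. -/
noncomputable def Dpetz {n : Type*} [Fintype n] [DecidableEq n] (α : ℝ)
    (ρ σ : Matrix n n ℂ) : ℝ :=
  (α - 1)⁻¹ * Real.log ((mpow ρ α * mpow σ (1 - α)).trace.re)

/-- Partial trace over the second tensor factor. -/
noncomputable def ptrB {A B : Type*} [Fintype B] (M : Matrix (A × B) (A × B) ℂ) :
    Matrix A A ℂ :=
  Matrix.of fun a a' => ∑ b, M (a, b) (a', b)

/-- Partial transpose on the second tensor factor. -/
def ptB {A B : Type*} (M : Matrix (A × B) (A × B) ℂ) : Matrix (A × B) (A × B) ℂ :=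
  Matrix.of fun x y => M (x.1, y.2) (y.1, x.2)

/-- Largest eigenvalue of a Hermitian matrix (`0` on non-Hermitian matrices). -/
noncomputable def lamMax {n : Type*} [Fintype n] [DecidableEq n] (M : Matrix n n ℂ) : ℝ :=
  if hM : M.IsHermitian then ⨆ i, hM.eigenvalues i else 0

/-- The action `Λ_J(ρ)` on the `A`-subsystem of the CP map with Choi matrix `J`. -/
noncomputable def chanApply {R A B : Type*} [Fintype A] (J : Matrix (A × B) (A × B) ℂ)
    (ρ : Matrix (R × A) (R × A) ℂ) : Matrix (R × B) (R × B) ℂ :=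
  Matrix.of fun x y => ∑ a, ∑ a', ρ (x.1, a) (y.1, a') * J (a, x.2) (a', y.2)

/-- Cone of separable operators: finite sums of Kronecker products of PSD matrices. -/
def SEPcone (A B : Type*) [Fintype A] [Fintype B] : Set (Matrix (A × B) (A × B) ℂ) :=
  { M | ∃ (k : ℕ) (P : Fin k → Matrix A A ℂ) (Q : Fin k → Matrix B B ℂ),
      (∀ i, (P i).PosSemidef) ∧ (∀ i, (Q i).PosSemidef) ∧ M = ∑ i, (P i) ⊗ₖ (Q i) }

/-- Trace norm `‖X‖₁ = tr √(X* X)`. -/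
noncomputable def traceNorm {n : Type*} [Fintype n] [DecidableEq n] (X : Matrix n n ℂ) : ℝ :=
  ((mpow (Xᴴ * X) (1/2)).trace).re

/-- Moore–Penrose pseudo-inverse of a PSD matrix. -/
noncomputable def mpinv {n : Type*} [Fintype n] [DecidableEq n] (M : Matrix n n ℂ) :
    Matrix n n ℂ :=
  mpow M (-1)

/-- Link product of Choi matrices (Choi matrix of the composed map). -/
noncomputable def linkProd {A B C : Type*} [Fintype B] (J₁ : Matrix (A × B) (A × B) ℂ)
    (J₂ : Matrix (B × C) (B × C) ℂ) : Matrix (A × C) (A × C) ℂ :=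
  Matrix.of fun x y => ∑ b, ∑ b', J₁ (x.1, b) (y.1, b') * J₂ (b, x.2) (b', y.2)

/-!
Real powers, `G_β`, the partial trace and `λ_max` are all multiplicative for `⊗`. If
`A = U (diag c) U*` and `B = V (diag d) V*`, then `A ⊗ B = (U ⊗ V) (diag (cᵢ dⱼ)) (U ⊗ V)*`. As
`t ↦ t ^ β` is multiplicative on `[0, ∞)`, real powers of positive semidefinite matrices factor
over `⊗`, and hence so does `G_β`; as the eigenvalues are nonnegative, the largest product `cᵢ dⱼ`
is the product of the largest ones. The partial trace factors already at the level of entries.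
-/

section FunctionalCalculus

variable {𝕜 m n p : Type*} [RCLike 𝕜] [Fintype m] [DecidableEq m] [Fintype n] [DecidableEq n]
  [Fintype p] [DecidableEq p]

theorem cfc_algHom_pi {ι R : Type*} [Finite ι] [Ring R] [StarRing R] [TopologicalSpace R]
    [Algebra ℝ R] [ContinuousFunctionalCalculus ℝ R IsSelfAdjoint] (Φ : (ι → ℝ) →ₐ[ℝ] R)
    {d : ι → ℝ} (hd : IsSelfAdjoint (Φ d)) (f : ℝ → ℝ) : cfc f (Φ d) = Φ (f ∘ d) := by
  -- `f` agrees with a polynomial on the finite set of values of `d`, and `Φ` commutes with it.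
  let p := Lagrange.interpolate (Set.finite_range d).toFinset id f
  have eval_p (i : ι) : p.eval (d i) = f (d i) :=
    Lagrange.eval_interpolate_at_node f Function.injective_id.injOn (by simp)
  have aeval_p : Polynomial.aeval d p = f ∘ d := by
    ext i
    simpa using eval_p i
  have spectrum_subset : spectrum ℝ (Φ d) ⊆ Set.range d := by
    refine (AlgHom.spectrum_apply_subset Φ d).trans fun x hx => ?_
    rw [Pi.spectrum_eq, Set.mem_iUnion] at hx
    obtain ⟨i, hi⟩ := hx
    exact ⟨i, ((spectrum.scalar_eq (A := ℝ) (d i)).subset hi).symm⟩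
  calc cfc f (Φ d) = cfc p.eval (Φ d) := cfc_congr fun x hx => by
        obtain ⟨i, rfl⟩ := spectrum_subset hx
        exact (eval_p i).symm
    _ = Polynomial.aeval (Φ d) p := cfc_polynomial p (Φ d)
    _ = Φ (f ∘ d) := by rw [Polynomial.aeval_algHom_apply, aeval_p]

/-- The algebra homomorphism `d ↦ U (diag d) U*`. A Hermitian matrix is the image of its
eigenvalues under the one attached to a unitary matrix of eigenvectors. -/
noncomputable def unitaryDiagonalHom (U : unitary (Matrix n n 𝕜)) :
    (n → ℝ) →ₐ[ℝ] Matrix n n 𝕜 :=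
  (((Unitary.conjStarAlgAut 𝕜 _ U).toAlgEquiv.toAlgHom.comp (diagonalAlgHom 𝕜)).restrictScalars
    ℝ).comp (RCLike.ofRealAm.compLeft n)

theorem unitaryDiagonalHom_apply (U : unitary (Matrix n n 𝕜)) (d : n → ℝ) :
    unitaryDiagonalHom U d =
      (U : Matrix n n 𝕜) * diagonal (RCLike.ofReal ∘ d) * (U : Matrix n n 𝕜)ᴴ :=
  rfl

theorem isHermitian_unitaryDiagonalHom (U : unitary (Matrix n n 𝕜)) (d : n → ℝ) :
    (unitaryDiagonalHom U d).IsHermitian :=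
  isHermitian_mul_mul_conjTranspose _ <| isHermitian_diagonal_of_self_adjoint _ <| by
    ext i
    simp

theorem unitaryDiagonalHom_eigenvalues {A : Matrix n n 𝕜} (hA : A.IsHermitian) :
    unitaryDiagonalHom hA.eigenvectorUnitary hA.eigenvalues = A :=
  hA.spectral_theorem.symm

theorem cfc_unitaryDiagonalHom (f : ℝ → ℝ) (U : unitary (Matrix n n 𝕜)) (d : n → ℝ) :
    cfc f (unitaryDiagonalHom U d) = unitaryDiagonalHom U (f ∘ d) :=
  cfc_algHom_pi _ (isHermitian_unitaryDiagonalHom U d) f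

theorem spectrum_unitaryDiagonalHom (U : unitary (Matrix n n 𝕜)) (d : n → ℝ) :
    spectrum ℝ (unitaryDiagonalHom U d) = Set.range d := by
  ext x
  rw [unitaryDiagonalHom_apply, ← star_eq_conjTranspose, Unitary.spectrum_star_right_conjugate,
    ← spectrum.algebraMap_mem_iff 𝕜, spectrum_diagonal]
  simp

theorem unitaryDiagonalHom_kronecker (U : unitary (Matrix m m 𝕜)) (V : unitary (Matrix n n 𝕜))
    (c : m → ℝ) (d : n → ℝ) :
    unitaryDiagonalHom U c ⊗ₖ unitaryDiagonalHom V d =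
      unitaryDiagonalHom ⟨(U : Matrix m m 𝕜) ⊗ₖ (V : Matrix n n 𝕜),
        kronecker_mem_unitary U.2 V.2⟩ (fun i => c i.1 * d i.2) := by
  simp only [unitaryDiagonalHom_apply, mul_kronecker_mul, diagonal_kronecker_diagonal,
    conjTranspose_kronecker, Function.comp_def, RCLike.ofReal_mul]

theorem cfc_kronecker {f : ℝ → ℝ} {A : Matrix m m 𝕜} {B : Matrix n n 𝕜} (hA : A.IsHermitian)
    (hB : B.IsHermitian)
    (hf : ∀ x ∈ spectrum ℝ A, ∀ y ∈ spectrum ℝ B, f (x * y) = f x * f y) :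
    cfc f (A ⊗ₖ B) = cfc f A ⊗ₖ cfc f B := by
  rw [← unitaryDiagonalHom_eigenvalues hA, ← unitaryDiagonalHom_eigenvalues hB]
  simp only [unitaryDiagonalHom_kronecker, cfc_unitaryDiagonalHom]
  congr 1
  ext i
  exact hf _ (hA.eigenvalues_mem_spectrum_real i.1) _ (hB.eigenvalues_mem_spectrum_real i.2)

theorem cfc_reindex (f : ℝ → ℝ) (e : n ≃ p) (A : Matrix n n 𝕜) :
    cfc f (reindex e e A) = reindex e e (cfc f A) := by
  by_cases hA : A.IsHermitian
  · let φ : Matrix n n 𝕜 ≃⋆ₐ[ℝ] Matrix p p 𝕜 :=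
      StarAlgEquiv.ofAlgEquiv (reindexAlgEquiv ℝ 𝕜 e) fun M => (conjTranspose_reindex e e M).symm
    exact (StarAlgHomClass.map_cfc φ f A (finite_real_spectrum.continuousOn f)
      (continuous_id.matrix_submatrix _ _) hA (hA.reindex e)).symm
  · have hA' : ¬(reindex e e A).IsHermitian := (isHermitian_submatrix_equiv e.symm).not.mpr hA
    rw [cfc_apply_of_not_predicate (p := IsSelfAdjoint) A hA,
      cfc_apply_of_not_predicate (p := IsSelfAdjoint) _ hA']
    rfl

end FunctionalCalculus

/-- The real power function with the convention `0 ^ β = 0`, including `β = 0`. -/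
noncomputable def rpowOnSupport (β x : ℝ) : ℝ := if x = 0 then 0 else x ^ β

theorem rpowOnSupport_nonneg (β : ℝ) {x : ℝ} (hx : 0 ≤ x) : 0 ≤ rpowOnSupport β x := by
  unfold rpowOnSupport
  positivity

theorem rpowOnSupport_mul (β : ℝ) {x y : ℝ} (hx : 0 ≤ x) (hy : 0 ≤ y) :
    rpowOnSupport β (x * y) = rpowOnSupport β x * rpowOnSupport β y := by
  unfold rpowOnSupport
  by_cases hx₀ : x = 0 <;> by_cases hy₀ : y = 0 <;> simp [hx₀, hy₀, Real.mul_rpow hx hy]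

section GeometricMean

variable {m n p : Type*} [Fintype m] [DecidableEq m] [Fintype n] [DecidableEq n]
  [Fintype p] [DecidableEq p]

theorem mpow_eq_cfc (A : Matrix n n ℂ) (β : ℝ) : mpow A β = cfc (rpowOnSupport β) A := by
  by_cases hA : A.IsHermitian
  · rw [mpow, dif_pos hA, hA.cfc_eq]
    rfl
  · rw [mpow, dif_neg hA, cfc_apply_of_not_predicate (p := IsSelfAdjoint) A hA]

theorem isHermitian_mpow (A : Matrix n n ℂ) (β : ℝ) : (mpow A β).IsHermitian := by
  rw [mpow_eq_cfc]
  exact cfc_predicate _ _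

open scoped MatrixOrder in
theorem posSemidef_mpow {A : Matrix n n ℂ} (hA : A.PosSemidef) (β : ℝ) :
    (mpow A β).PosSemidef := by
  rw [mpow_eq_cfc, ← nonneg_iff_posSemidef]
  exact cfc_nonneg fun x hx => rpowOnSupport_nonneg β (spectrum_nonneg_of_nonneg hA.nonneg hx)

theorem mpow_reindex (e : n ≃ p) (A : Matrix n n ℂ) (β : ℝ) :
    mpow (reindex e e A) β = reindex e e (mpow A β) := by
  simp only [mpow_eq_cfc, cfc_reindex]

open scoped MatrixOrder in
theorem mpow_kronecker {A : Matrix m m ℂ} {B : Matrix n n ℂ} (hA : A.PosSemidef)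
    (hB : B.PosSemidef) (β : ℝ) : mpow (A ⊗ₖ B) β = mpow A β ⊗ₖ mpow B β := by
  simp only [mpow_eq_cfc]
  exact cfc_kronecker hA.isHermitian hB.isHermitian fun x hx y hy =>
    rpowOnSupport_mul β (spectrum_nonneg_of_nonneg hA.nonneg hx)
      (spectrum_nonneg_of_nonneg hB.nonneg hy)

theorem posSemidef_mpow_mul_mul_mpow (A : Matrix n n ℂ) {B : Matrix n n ℂ} (hB : B.PosSemidef)
    (β : ℝ) : (mpow A β * B * mpow A β).PosSemidef := by
  simpa only [(isHermitian_mpow A β).eq] using hB.mul_mul_conjTranspose_same (mpow A β)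

theorem posSemidef_geomMean (β : ℝ) (X : Matrix n n ℂ) {Y : Matrix n n ℂ} (hY : Y.PosSemidef) :
    (geomMean β X Y).PosSemidef :=
  posSemidef_mpow_mul_mul_mpow X (posSemidef_mpow (posSemidef_mpow_mul_mul_mpow X hY _) β) _

theorem geomMean_reindex (β : ℝ) (e : n ≃ p) (X Y : Matrix n n ℂ) :
    geomMean β (reindex e e X) (reindex e e Y) = reindex e e (geomMean β X Y) := by
  have reindex_mul (A B : Matrix n n ℂ) : reindex e e A * reindex e e B = reindex e e (A * B) :=
    submatrix_mul_equiv A B _ _ _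
  simp only [geomMean, mpow_reindex, reindex_mul]

theorem geomMean_kronecker (β : ℝ) {X₁ Y₁ : Matrix m m ℂ} {X₂ Y₂ : Matrix n n ℂ}
    (hX₁ : X₁.PosSemidef) (hY₁ : Y₁.PosSemidef) (hX₂ : X₂.PosSemidef) (hY₂ : Y₂.PosSemidef) :
    geomMean β (X₁ ⊗ₖ X₂) (Y₁ ⊗ₖ Y₂) = geomMean β X₁ Y₁ ⊗ₖ geomMean β X₂ Y₂ := by
  simp only [geomMean, mpow_kronecker hX₁ hX₂, ← mul_kronecker_mul,
    mpow_kronecker (posSemidef_mpow_mul_mul_mpow X₁ hY₁ _)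
      (posSemidef_mpow_mul_mul_mpow X₂ hY₂ _)]

end GeometricMean

section PartialTrace

theorem ptrB_eq_sum_submatrix {A B : Type*} [Fintype B] (M : Matrix (A × B) (A × B) ℂ) :
    ptrB M = ∑ b, M.submatrix (·, b) (·, b) := by
  ext a a'
  simp [ptrB, Matrix.sum_apply]

theorem posSemidef_ptrB {A B : Type*} [Fintype B] {M : Matrix (A × B) (A × B) ℂ}
    (hM : M.PosSemidef) : (ptrB M).PosSemidef := by
  rw [ptrB_eq_sum_submatrix]
  exact posSemidef_sum _ fun b _ => hM.submatrix _

theorem ptrB_reindex_kronecker {A₁ B₁ A₂ B₂ : Type*} [Fintype B₁] [Fintype B₂]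
    (M : Matrix (A₁ × B₁) (A₁ × B₁) ℂ) (N : Matrix (A₂ × B₂) (A₂ × B₂) ℂ) :
    ptrB (reindex (Equiv.prodProdProdComm A₁ B₁ A₂ B₂) (Equiv.prodProdProdComm A₁ B₁ A₂ B₂)
      (M ⊗ₖ N)) = ptrB M ⊗ₖ ptrB N := by
  ext ⟨a₁, a₂⟩ ⟨a₁', a₂'⟩
  simp [ptrB, Fintype.sum_prod_type, Finset.sum_mul_sum]

end PartialTrace

section LargestEigenvalue

variable {m n : Type*} [Fintype m] [DecidableEq m] [Fintype n] [DecidableEq n]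

theorem iSup_mul_eq_iSup_mul_iSup_of_nonneg {ι κ : Type*} [Finite ι] [Finite κ] {c : ι → ℝ}
    {d : κ → ℝ} (hc : ∀ i, 0 ≤ c i) (hd : ∀ j, 0 ≤ d j) :
    ⨆ i : ι × κ, c i.1 * d i.2 = (⨆ i, c i) * ⨆ j, d j := by
  simp only [Finite.ciSup_prod, Real.iSup_mul_of_nonneg (Real.iSup_nonneg hd),
    Real.mul_iSup_of_nonneg (hc _)]

theorem lamMax_eq_sSup_spectrum {A : Matrix n n ℂ} (hA : A.IsHermitian) :
    lamMax A = sSup (spectrum ℝ A) := by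
  rw [lamMax, dif_pos hA, hA.spectrum_real_eq_range_eigenvalues, sSup_range]

theorem lamMax_unitaryDiagonalHom (U : unitary (Matrix n n ℂ)) (d : n → ℝ) :
    lamMax (unitaryDiagonalHom U d) = ⨆ i, d i := by
  rw [lamMax_eq_sSup_spectrum (isHermitian_unitaryDiagonalHom U d), spectrum_unitaryDiagonalHom,
    sSup_range]

theorem lamMax_kronecker {A : Matrix m m ℂ} {B : Matrix n n ℂ} (hA : A.PosSemidef)
    (hB : B.PosSemidef) : lamMax (A ⊗ₖ B) = lamMax A * lamMax B := by
  rw [← unitaryDiagonalHom_eigenvalues hA.isHermitian,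
    ← unitaryDiagonalHom_eigenvalues hB.isHermitian, unitaryDiagonalHom_kronecker]
  simp only [lamMax_unitaryDiagonalHom]
  exact iSup_mul_eq_iSup_mul_iSup_of_nonneg hA.eigenvalues_nonneg hB.eigenvalues_nonneg

end LargestEigenvalue

theorem channel_divergence_additivity_general {A₁ B₁ A₂ B₂ : Type*}
    [Fintype A₁] [DecidableEq A₁] [Fintype B₁] [DecidableEq B₁]
    [Fintype A₂] [DecidableEq A₂] [Fintype B₂] [DecidableEq B₂]
    {J₁ K₁ : Matrix (A₁ × B₁) (A₁ × B₁) ℂ} (hJ₁ : J₁.PosSemidef) (hK₁ : K₁.PosSemidef)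
    {J₂ K₂ : Matrix (A₂ × B₂) (A₂ × B₂) ℂ} (hJ₂ : J₂.PosSemidef) (hK₂ : K₂.PosSemidef) (β : ℝ) :
    let e := Equiv.prodProdProdComm A₁ B₁ A₂ B₂
    lamMax (ptrB (geomMean β (reindex e e (J₁ ⊗ₖ J₂)) (reindex e e (K₁ ⊗ₖ K₂)))) =
      lamMax (ptrB (geomMean β J₁ K₁)) * lamMax (ptrB (geomMean β J₂ K₂)) := by
  intro e
  calc lamMax (ptrB (geomMean β (reindex e e (J₁ ⊗ₖ J₂)) (reindex e e (K₁ ⊗ₖ K₂))))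
      = lamMax (ptrB (reindex e e (geomMean β J₁ K₁ ⊗ₖ geomMean β J₂ K₂))) := by
        rw [geomMean_reindex, geomMean_kronecker β hJ₁ hK₁ hJ₂ hK₂]
    _ = lamMax (ptrB (geomMean β J₁ K₁) ⊗ₖ ptrB (geomMean β J₂ K₂)) := by
        rw [ptrB_reindex_kronecker]
    _ = lamMax (ptrB (geomMean β J₁ K₁)) * lamMax (ptrB (geomMean β J₂ K₂)) :=
        lamMax_kronecker (posSemidef_ptrB (posSemidef_geomMean β J₁ hK₁))
          (posSemidef_ptrB (posSemidef_geomMean β J₂ hK₂))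

/-- additivity of the geometric Rényi channel divergence under tensor
products of channels, in terms of Choi matrices:
`λ_max(tr_{B₁×B₂} G_{1−α}(Ĵ, K̂)) = λ_max(tr_{B₁} G_{1−α}(J₁,K₁)) · λ_max(tr_{B₂} G_{1−α}(J₂,K₂))`. -/
theorem channel_divergence_additivity {A₁ B₁ A₂ B₂ : Type*}
    [Fintype A₁] [DecidableEq A₁] [Fintype B₁] [DecidableEq B₁]
    [Fintype A₂] [DecidableEq A₂] [Fintype B₂] [DecidableEq B₂]
    (J₁ K₁ : Matrix (A₁ × B₁) (A₁ × B₁) ℂ) (hJ₁ : J₁.PosSemidef) (hK₁ : K₁.PosSemidef)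
    (J₂ K₂ : Matrix (A₂ × B₂) (A₂ × B₂) ℂ) (hJ₂ : J₂.PosSemidef) (hK₂ : K₂.PosSemidef)
    (α : ℝ) (hα1 : 1 < α) (hα2 : α ≤ 2) :
    lamMax (ptrB (geomMean (1 - α)
        (Matrix.reindex (Equiv.prodProdProdComm A₁ B₁ A₂ B₂)
          (Equiv.prodProdProdComm A₁ B₁ A₂ B₂) (J₁ ⊗ₖ J₂))
        (Matrix.reindex (Equiv.prodProdProdComm A₁ B₁ A₂ B₂)
          (Equiv.prodProdProdComm A₁ B₁ A₂ B₂) (K₁ ⊗ₖ K₂)))) =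
      lamMax (ptrB (geomMean (1 - α) J₁ K₁)) * lamMax (ptrB (geomMean (1 - α) J₂ K₂)) :=
  channel_divergence_additivity_general hJ₁ hK₁ hJ₂ hK₂ (1 - α)
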